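/- arXiv:2506.22203 — 2 statements merged into one kernel-verified Lean document; each statement's English description precedes it below -/
import Mathlib

section
/- One has K₂(x̂) = C₂ and K₂(x̂) < 0; in particular the coefficient C₂ of the candidate optimal value function is strictly negative. -/
open Real Filter

/-!
Write `v x = K₁ * exp (a * x) + C * exp (lam₂ * x)`. The coefficient `C = K₂ z` is the one with
`v' z = c`, and the `C` with `v'' z = 0` is a negative multiple of `exp ((a - lam₂) * z)`. The two
prescriptions agree exactly when `K₁ * a * (lam₂ - a) * exp (a * z) = lam₂ * c`, an equation whose
solution is `xhat`, where the second prescription reads `C₂`. That the logarithm defining `xhat` has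
a positive argument comes from `a < lam₂`: the hypothesis on `β` says that the quadratic with larger
root `lam₂` is negative at `a`.
-/

theorem lt_larger_root_of_quadratic_neg {A B C x : ℝ} (hA : 0 < A)
    (hx : A * x ^ 2 + B * x + C < 0) : x < (-B + √(discrim A B C)) / (2 * A) := by
  have hsq : (2 * A * x + B) ^ 2 < discrim A B C := by
    rw [discrim]
    linarith [mul_neg_of_pos_of_neg hA hx]
  rw [lt_div_iff₀ (by positivity)]
  linarith [lt_sqrt_of_sq_lt hsq]

/-- The coefficient `C` for which `x ↦ K * exp (a * x) + C * exp (r * x)` has slope `c` at `z`; this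
requires `r ≠ 0`. -/
noncomputable def slopeCoeff (K a c r z : ℝ) : ℝ :=
  (c - K * a * exp (a * z)) / (r * exp (r * z))

/-- The coefficient `C` for which `x ↦ K * exp (a * x) + C * exp (r * x)` has vanishing second
derivative at `z`; this requires `r ≠ 0`. -/
noncomputable def curvatureCoeff (K a r z : ℝ) : ℝ :=
  -(K * a ^ 2 / r ^ 2) * exp ((a - r) * z)

/-- The point at which `x ↦ K * exp (a * x) + C * exp (r * x)` can have both slope `c` and vanishing
second derivative. It is meaningful when the argument of the logarithm is positive. -/
noncomputable def smoothFitPoint (K a c r : ℝ) : ℝ :=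
  1 / a * log (r * c / (K * a * (r - a)))

section SmoothFit

variable {K a c r z : ℝ}

theorem curvatureCoeff_neg (hK : 0 < K) (ha : a ≠ 0) (hr : r ≠ 0) : curvatureCoeff K a r z < 0 :=
  mul_neg_of_neg_of_pos (neg_neg_of_pos (by positivity)) (exp_pos _)

theorem slopeCoeff_eq_curvatureCoeff_iff_exp (hr : r ≠ 0) :
    slopeCoeff K a c r z = curvatureCoeff K a r z ↔ K * a * (r - a) * exp (a * z) = r * c := by
  rw [slopeCoeff, curvatureCoeff, sub_mul, exp_sub]
  field_simp
  constructor <;> intro h <;> linarith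

theorem slopeCoeff_eq_curvatureCoeff_iff (h : 0 < r * c / (K * a * (r - a))) :
    slopeCoeff K a c r z = curvatureCoeff K a r z ↔ z = smoothFitPoint K a c r := by
  obtain ⟨hnum, hden⟩ := div_ne_zero_iff.mp h.ne'
  have ha : a ≠ 0 := right_ne_zero_of_mul (left_ne_zero_of_mul hden)
  calc slopeCoeff K a c r z = curvatureCoeff K a r z
      ↔ K * a * (r - a) * exp (a * z) = r * c :=
        slopeCoeff_eq_curvatureCoeff_iff_exp (left_ne_zero_of_mul hnum)
    _ ↔ exp (a * z) = r * c / (K * a * (r - a)) := by rw [eq_div_iff hden, mul_comm]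
    _ ↔ a * z = log (r * c / (K * a * (r - a))) := by
        rw [← exp_eq_exp (x := a * z), exp_log h]
    _ ↔ z = smoothFitPoint K a c r := by
        rw [smoothFitPoint, one_div, eq_inv_mul_iff_mul_eq₀ ha]

end SmoothFit

theorem stmt_11
    (μ σ c a β : ℝ)
    (hσ : σ > 0) (hc : c > 0) (ha : a > 0) (hβ : β > 0)
    (hβ' : β > μ * a + (1/2) * σ^2 * a^2)
    (lam₁ lam₂ K₁ xhat C₂ : ℝ)
    (hlam₁ : lam₁ = (-μ - Real.sqrt (μ^2 + 2*β*σ^2)) / σ^2)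
    (hlam₂ : lam₂ = (-μ + Real.sqrt (μ^2 + 2*β*σ^2)) / σ^2)
    (hK₁ : K₁ = 1 / (β - μ*a - (1/2)*σ^2*a^2))
    (hxhat : xhat = (1/a) * Real.log (lam₂*c*(β - μ*a - (1/2)*σ^2*a^2) / (lam₂*a - a^2)))
    (hC₂ : C₂ = -(a^2 / (lam₂^2 * (β - μ*a - (1/2)*σ^2*a^2))) * Real.exp ((a - lam₂) * xhat))
    (K₂ : ℝ → ℝ)
    (hK₂ : ∀ z, K₂ z = (c - K₁*a*Real.exp (a*z)) / (lam₂ * Real.exp (lam₂*z)))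
    :
    K₂ xhat = C₂ ∧ K₂ xhat < 0 ∧ C₂ < 0 := by
  have hlt : a < lam₂ := by
    rw [hlam₂]
    convert lt_larger_root_of_quadratic_neg (A := σ ^ 2 / 2) (B := μ) (C := -β) (x := a)
      (by positivity) (by linarith) using 1
    rw [discrim]
    ring_nf
  have hlam₂_pos : 0 < lam₂ := ha.trans hlt
  have hK₁_pos : 0 < K₁ := hK₁ ▸ one_div_pos.mpr (by linarith)
  have hxhat_eq : xhat = smoothFitPoint K₁ a c lam₂ := by
    rw [hxhat, smoothFitPoint, hK₁]
    congr 2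
    field_simp
  have hC₂_eq : C₂ = curvatureCoeff K₁ a lam₂ xhat := by
    rw [hC₂, curvatureCoeff, hK₁]
    field_simp
  have hC₂_neg : C₂ < 0 := hC₂_eq ▸ curvatureCoeff_neg hK₁_pos ha.ne' hlam₂_pos.ne'
  have harg : 0 < lam₂ * c / (K₁ * a * (lam₂ - a)) :=
    div_pos (by positivity) (mul_pos (by positivity) (sub_pos.mpr hlt))
  have hfit : K₂ xhat = C₂ :=
    (hK₂ xhat).trans (((slopeCoeff_eq_curvatureCoeff_iff harg).mpr hxhat_eq).trans hC₂_eq.symm)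
  exact ⟨hfit, hfit ▸ hC₂_neg, hC₂_neg⟩
end

section
/- Let T : ℝ → ℝ be the policy improvement map assigning to each boundary z the unique real w such that the interior of { x ∈ ℝ : q₀(x; z) ≥ 0 and q₁(x; z) ≤ 0 } equals (−∞, w). Then for every initial boundary z₀ ∈ ℝ, the iterated sequence defined by z_{n+1} = T(z_n) converges to x̂; that is, the policy iteration of singular control laws with lower-ray waiting regions converges to the optimal free boundary x̂ from any starting point. -/
open Real Filter

/-!
Let `M z = -J_z''(z-)` be the failure of smooth fit at the boundary `z`; it is continuous, strictly
increasing and vanishes exactly at `xhat`. Both `q`-functions are integrals of it: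
`q₀(x; z) = -exp (λ₂ x) ∫_x^z exp (-λ₂ t) M t dt` for `x < z`, and
`q₁(x; z) = (σ² / 2) M x + (β / λ₂) ∫_z^x M t dt` for `x ≥ z`.
Hence `T` swaps the two sides of `xhat`: from `z > xhat` it jumps to the `y < xhat` with
`∫_y^z exp (-λ₂ t) M t dt = 0`, and from `z < xhat` to the `y > xhat` with
`(σ² / 2) M y + (β / λ₂) ∫_z^y M t dt = 0`. In the second case `∫_z^y M t dt < 0`, and since
`exp (-λ₂ t)` is decreasing while `M` changes sign only once, from negative to positive, also
`∫_z^y exp (-λ₂ t) M t dt < 0`. Comparing the two cases, `T ∘ T` moves every point towards `xhat`,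
and the same inequality rules out a limiting cycle of period two.
-/

section AlternatingIteration

lemma tendsto_of_tendsto_two_mul {α : Type*} {u : ℕ → α} {l : Filter α}
    (heven : Tendsto (fun n => u (2 * n)) atTop l)
    (hodd : Tendsto (fun n => u (2 * n + 1)) atTop l) : Tendsto u atTop l := by
  intro s hs
  obtain ⟨N, hN⟩ := eventually_atTop.1 ((heven.eventually_mem hs).and (hodd.eventually_mem hs))
  refine mem_atTop_sets.2 ⟨2 * N, fun n hn => ?_⟩
  obtain ⟨j, rfl | rfl⟩ := n.even_or_odd'
  · exact (hN j (by lia)).1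
  · exact (hN j (by lia)).2

variable {α : Type*} [ConditionallyCompleteLinearOrder α] [TopologicalSpace α] [OrderTopology α]
  {T : α → α} {b : α} {F H : Set (α × α)}

lemma tendsto_iterate_of_alternating_of_lt (hF : IsClosed F) (hH : IsClosed H)
    (hbelow : ∀ z < b, b < T z ∧ (z, T z) ∈ F) (habove : ∀ z > b, T z < b ∧ (T z, z) ∈ H)
    (hsq_below : ∀ z < b, z ≤ T (T z)) (hsq_above : ∀ z > b, T (T z) ≤ z)
    (hcycle : ∀ l ≤ b, ∀ m ≥ b, (l, m) ∈ F → (l, m) ∈ H → l = b ∧ m = b)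
    {z : α} (hz : z < b) : Tendsto (fun n => T^[n] z) atTop (nhds b) := by
  set u : ℕ → α := fun n => T^[2 * n] z
  have hsucc (n : ℕ) : u (n + 1) = T (T (u n)) := by
    simp only [u, mul_add, mul_one, Function.iterate_succ_apply']
  have hu (n : ℕ) : u n < b := by
    induction n with
    | zero => exact hz
    | succ n ih => rw [hsucc]; exact (habove _ (hbelow _ ih).1).1
  have hTu (n : ℕ) : b < T (u n) := (hbelow _ (hu n)).1
  have hmono : Monotone u := monotone_nat_of_le_succ fun n => by
    rw [hsucc]; exact hsq_below _ (hu n)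
  have hanti : Antitone fun n => T (u n) := antitone_nat_of_succ_le fun n => by
    rw [hsucc]; exact hsq_above _ (hTu n)
  obtain ⟨l, hl⟩ : ∃ l, Tendsto u atTop (nhds l) :=
    ⟨_, tendsto_atTop_ciSup hmono ⟨b, Set.forall_mem_range.2 fun n => (hu n).le⟩⟩
  obtain ⟨m, hm⟩ : ∃ m, Tendsto (fun n => T (u n)) atTop (nhds m) :=
    ⟨_, tendsto_atTop_ciInf hanti ⟨b, Set.forall_mem_range.2 fun n => (hTu n).le⟩⟩
  have hlmF : (l, m) ∈ F :=
    hF.mem_of_tendsto (hl.prodMk_nhds hm) (.of_forall fun n => (hbelow _ (hu n)).2)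
  have hlmH : (l, m) ∈ H := by
    refine hH.mem_of_tendsto (((tendsto_add_atTop_iff_nat 1).2 hl).prodMk_nhds hm)
      (.of_forall fun n => ?_)
    rw [hsucc]
    exact (habove _ (hTu n)).2
  obtain ⟨rfl, rfl⟩ := hcycle l (le_of_tendsto' hl fun n => (hu n).le)
    m (ge_of_tendsto' hm fun n => (hTu n).le) hlmF hlmH
  exact tendsto_of_tendsto_two_mul hl (by simpa only [u, Function.iterate_succ_apply'] using hm)

lemma tendsto_iterate_of_alternating (hF : IsClosed F) (hH : IsClosed H) (hfix : T b = b)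
    (hbelow : ∀ z < b, b < T z ∧ (z, T z) ∈ F) (habove : ∀ z > b, T z < b ∧ (T z, z) ∈ H)
    (hsq_below : ∀ z < b, z ≤ T (T z)) (hsq_above : ∀ z > b, T (T z) ≤ z)
    (hcycle : ∀ l ≤ b, ∀ m ≥ b, (l, m) ∈ F → (l, m) ∈ H → l = b ∧ m = b)
    (z₀ : α) : Tendsto (fun n => T^[n] z₀) atTop (nhds b) := by
  have of_lt {z : α} (hz : z < b) : Tendsto (fun n => T^[n] z) atTop (nhds b) :=
    tendsto_iterate_of_alternating_of_lt hF hH hbelow habove hsq_below hsq_above hcycle hz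
  rcases lt_trichotomy z₀ b with h | rfl | h
  · exact of_lt h
  · simp only [Function.iterate_fixed hfix, tendsto_const_nhds]
  · rw [← tendsto_add_atTop_iff_nat 1]
    exact of_lt (habove _ h).1

end AlternatingIteration

section Frontier

lemma mem_frontier_of_interior_eq_Iio {α : Type*} [LinearOrder α] [TopologicalSpace α]
    [OrderTopology α] [DenselyOrdered α] [NoMinOrder α] {S : Set α} {t : α}
    (hS : interior S = Set.Iio t) : t ∈ frontier S := by
  refine ⟨closure_mono interior_subset ?_, ?_⟩ <;> simp [hS]

lemma eq_of_mem_frontier_of_eventually_mem_iff_le {X α : Type*} [TopologicalSpace X]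
    [LinearOrder α] [TopologicalSpace α] [OrderClosedTopology α] {f : X → α} {S : Set X} {t : X}
    {c : α}
    (ht : t ∈ frontier S) (hf : ContinuousAt f t) (hS : ∀ᶠ x in nhds t, x ∈ S ↔ f x ≤ c) :
    f t = c := by
  refine le_antisymm (le_of_not_gt fun hlt => ?_) (le_of_not_gt fun hlt => ht.2 ?_)
  · obtain ⟨x, hxS, hx, hfx⟩ := ((mem_closure_iff_frequently.1 ht.1).and_eventually
      (hS.and (hf.eventually_const_lt hlt))).exists
    exact hfx.not_ge (hx.1 hxS)
  · rw [mem_interior_iff_mem_nhds]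
    filter_upwards [hS, hf.eventually_lt_const hlt] with x hx hfx using hx.2 hfx.le

end Frontier

section SingleCrossing

variable {M w : ℝ → ℝ} {b l m : ℝ}

lemma continuous_integral_endpoints {E : Type*} [NormedAddCommGroup E] [NormedSpace ℝ E]
    {ν : MeasureTheory.Measure ℝ} [MeasureTheory.NullSingletonClass ν] {f : ℝ → E}
    (hf : ∀ l m, IntervalIntegrable f ν l m) :
    Continuous fun p : ℝ × ℝ => ∫ t in p.1..p.2, f t ∂ν := by
  have hsub (p : ℝ × ℝ) :
      ∫ t in p.1..p.2, f t ∂ν = (∫ t in 0..p.2, f t ∂ν) - ∫ t in 0..p.1, f t ∂ν :=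
    (intervalIntegral.integral_interval_sub_left (hf 0 p.2) (hf 0 p.1)).symm
  have hprim := intervalIntegral.continuous_primitive hf 0
  simp only [hsub]
  exact (hprim.comp continuous_snd).sub (hprim.comp continuous_fst)

lemma intervalIntegrable_antitone_mul (hw : Antitone w) (hMc : Continuous M) (l m : ℝ) :
    IntervalIntegrable (fun t => w t * M t) MeasureTheory.volume l m :=
  hw.intervalIntegrable.mul_continuousOn hMc.continuousOn

lemma integral_mul_pos_of_ge (hw : Antitone w) (hpos : ∀ t, 0 < w t) (hMc : Continuous M)
    (hM : StrictMono M) (hb : M b = 0) (hl : b ≤ l) (hlm : l < m) :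
    0 < ∫ t in l..m, w t * M t :=
  intervalIntegral.intervalIntegral_pos_of_pos_on (intervalIntegrable_antitone_mul hw hMc l m)
    (fun t ht => mul_pos (hpos t) (hb ▸ hM (hl.trans_lt ht.1))) hlm

lemma integral_mul_neg_of_le (hw : Antitone w) (hpos : ∀ t, 0 < w t) (hMc : Continuous M)
    (hM : StrictMono M) (hb : M b = 0) (hm : m ≤ b) (hlm : l < m) :
    ∫ t in l..m, w t * M t < 0 := by
  rw [← neg_pos, ← intervalIntegral.integral_neg]
  exact intervalIntegral.intervalIntegral_pos_of_pos_on
    (intervalIntegrable_antitone_mul hw hMc l m).neg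
    (fun t ht => neg_pos.2 (mul_neg_of_pos_of_neg (hpos t) (hb ▸ hM (ht.2.trans_le hm)))) hlm

lemma integral_antitone_mul_le (hw : Antitone w) (hMc : Continuous M) (hM : Monotone M)
    (hb : M b = 0) (hlm : l ≤ m) : ∫ t in l..m, w t * M t ≤ w b * ∫ t in l..m, M t := by
  rw [← intervalIntegral.integral_const_mul]
  refine intervalIntegral.integral_mono_on hlm (intervalIntegrable_antitone_mul hw hMc l m)
    ((hMc.intervalIntegrable l m).const_mul _) fun t _ => ?_
  rcases le_total t b with htb | hbt
  · exact mul_le_mul_of_nonpos_right (hw htb) (hb ▸ hM htb)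
  · exact mul_le_mul_of_nonneg_right (hw hbt) (hb ▸ hM hbt)

end SingleCrossing

section PolicyImprovement

variable {M w : ℝ → ℝ} {r s b t z : ℝ}

/-- The waiting region obtained by one step of policy improvement from the boundary `z`, for a
marginal quantity `M` and a discount weight `w`: the first condition is the sign of the zero-order
`q`-function inside the old waiting region, the second one that of the first-order `q`-function
outside of it. In the control problem `s = σ² / 2` and `r = β / λ₂`. -/
def improvementRegion (M w : ℝ → ℝ) (r s z : ℝ) : Set ℝ :=
  {x | (x < z → ∫ t in x..z, w t * M t ≤ 0) ∧ (z ≤ x → s * M x + r * ∫ t in z..x, M t ≤ 0)}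

lemma mem_improvementRegion_of_lt {x : ℝ} (h : x < z) :
    x ∈ improvementRegion M w r s z ↔ ∫ t in x..z, w t * M t ≤ 0 := by
  simp [improvementRegion, h, h.not_ge]

lemma mem_improvementRegion_of_ge {x : ℝ} (h : z ≤ x) :
    x ∈ improvementRegion M w r s z ↔ s * M x + r * ∫ t in z..x, M t ≤ 0 := by
  simp [improvementRegion, h, h.not_gt]

lemma continuous_mul_add_mul_integral (hMc : Continuous M) (r s : ℝ) :
    Continuous fun p : ℝ × ℝ => s * M p.2 + r * ∫ t in p.1..p.2, M t :=
  ((hMc.comp continuous_snd).const_mul s).add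
    ((continuous_integral_endpoints fun l m => hMc.intervalIntegrable l m).const_mul r)

lemma improvementRegion_subset_Iic (hw : Antitone w) (hpos : ∀ t, 0 < w t) (hMc : Continuous M)
    (hM : StrictMono M) (hb : M b = 0) (hr : 0 ≤ r) (hs : 0 < s) (hz : b ≤ z) :
    improvementRegion M w r s z ⊆ Set.Iic b := by
  intro x hx
  by_contra! hbx
  rw [Set.mem_Iic, not_le] at hbx
  rcases lt_or_ge x z with hxz | hzx
  · exact ((mem_improvementRegion_of_lt hxz).1 hx).not_gt
      (integral_mul_pos_of_ge hw hpos hMc hM hb hbx.le hxz)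
  · have hint : 0 ≤ ∫ t in z..x, M t :=
      intervalIntegral.integral_nonneg hzx fun t ht => hb ▸ hM.monotone (hz.trans ht.1)
    have hMx : 0 < M x := hb ▸ hM hbx
    exact ((mem_improvementRegion_of_ge hzx).1 hx).not_gt (by positivity)

lemma Iio_subset_improvementRegion (hw : Antitone w) (hpos : ∀ t, 0 < w t) (hMc : Continuous M)
    (hM : StrictMono M) (hb : M b = 0) (hz : z ≤ b) :
    Set.Iio z ⊆ improvementRegion M w r s z := fun _ hx =>
  (mem_improvementRegion_of_lt hx).2 (integral_mul_neg_of_le hw hpos hMc hM hb hz hx).le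

lemma improved_boundary_le (hw : Antitone w) (hpos : ∀ t, 0 < w t) (hMc : Continuous M)
    (hM : StrictMono M) (hb : M b = 0) (hr : 0 ≤ r) (hs : 0 < s) (hz : b ≤ z)
    (ht : interior (improvementRegion M w r s z) = Set.Iio t) : t ≤ b :=
  Set.Iio_subset_Iic_iff.1 <| ht ▸ interior_subset.trans
    (improvementRegion_subset_Iic hw hpos hMc hM hb hr hs hz)

lemma improved_boundary_self (hw : Antitone w) (hpos : ∀ t, 0 < w t) (hMc : Continuous M)
    (hM : StrictMono M) (hb : M b = 0) (hr : 0 ≤ r) (hs : 0 < s)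
    (ht : interior (improvementRegion M w r s b) = Set.Iio t) : t = b := by
  refine (improved_boundary_le hw hpos hMc hM hb hr hs le_rfl ht).antisymm ?_
  rw [← Set.Iio_subset_Iio_iff, ← ht]
  exact interior_maximal (Iio_subset_improvementRegion hw hpos hMc hM hb le_rfl) isOpen_Iio

lemma improved_boundary_of_gt (hw : Antitone w) (hpos : ∀ t, 0 < w t) (hMc : Continuous M)
    (hM : StrictMono M) (hb : M b = 0) (hr : 0 ≤ r) (hs : 0 < s) (hz : b < z)
    (ht : interior (improvementRegion M w r s z) = Set.Iio t) :
    t < b ∧ ∫ x in t..z, w x * M x = 0 := by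
  have htb : t ≤ b := improved_boundary_le hw hpos hMc hM hb hr hs hz.le ht
  have hint : ∫ x in t..z, w x * M x = 0 := by
    refine eq_of_mem_frontier_of_eventually_mem_iff_le (f := fun y => ∫ x in y..z, w x * M x)
      (mem_frontier_of_interior_eq_Iio ht) ?_ ?_
    · exact ((continuous_integral_endpoints (intervalIntegrable_antitone_mul hw hMc)).comp
        (Continuous.prodMk_left z)).continuousAt
    · filter_upwards [Iio_mem_nhds (htb.trans_lt hz)] with y hy
      exact mem_improvementRegion_of_lt hy
  refine ⟨htb.lt_of_ne ?_, hint⟩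
  rintro rfl
  exact (integral_mul_pos_of_ge hw hpos hMc hM hb le_rfl hz).ne' hint

lemma improved_boundary_of_lt (hMc : Continuous M) (hM : StrictMono M) (hb : M b = 0) (hr : 0 < r)
    (hz : z < b) (ht : interior (improvementRegion M w r s z) = Set.Iio t) :
    b < t ∧ s * M t + r * ∫ x in z..t, M x = 0 := by
  have hcont : Continuous fun y => s * M y + r * ∫ x in z..y, M x :=
    (continuous_mul_add_mul_integral hMc r s).comp (Continuous.prodMk_right z)
  have hmem {y : ℝ} (hy : z < y) : ∀ᶠ x in nhds y,
      x ∈ improvementRegion M w r s z ↔ s * M x + r * ∫ t in z..x, M t ≤ 0 := by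
    filter_upwards [Ioi_mem_nhds hy] with x hx using mem_improvementRegion_of_ge (le_of_lt hx)
  have hneg : s * M b + r * ∫ x in z..b, M x < 0 := by
    have : ∫ x in z..b, M x < 0 := by
      simpa only [one_mul] using integral_mul_neg_of_le (w := fun _ => 1) antitone_const
        (fun _ => one_pos) hMc hM hb le_rfl hz
    simpa [hb] using mul_neg_of_pos_of_neg hr this
  have hbt : b < t := by
    rw [← Set.mem_Iio, ← ht, mem_interior_iff_mem_nhds]
    filter_upwards [hmem hz, hcont.continuousAt.eventually_lt_const hneg] with x hx hlt
      using hx.2 hlt.le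
  exact ⟨hbt, eq_of_mem_frontier_of_eventually_mem_iff_le
    (f := fun y => s * M y + r * ∫ x in z..y, M x) (mem_frontier_of_interior_eq_Iio ht)
    hcont.continuousAt (hmem (hz.trans hbt))⟩

lemma integral_mul_neg_of_mul_add_mul_integral_eq_zero (hw : Antitone w) (hpos : 0 < w b)
    (hMc : Continuous M) (hM : StrictMono M) (hb : M b = 0) (hr : 0 < r) (hs : 0 < s) (hz : z ≤ b)
    (ht : b < t) (h : s * M t + r * ∫ x in z..t, M x = 0) : ∫ x in z..t, w x * M x < 0 := by
  have hMt : 0 < s * M t := mul_pos hs (hb ▸ hM ht)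
  have hint : ∫ x in z..t, M x < 0 := neg_of_mul_neg_right (by linarith) hr.le
  exact (integral_antitone_mul_le hw hMc hM.monotone hb (hz.trans ht.le)).trans_lt
    (mul_neg_of_pos_of_neg hpos hint)

theorem tendsto_iterate_of_interior_improvementRegion {T : ℝ → ℝ} (hw : Antitone w)
    (hpos : ∀ t, 0 < w t) (hMc : Continuous M) (hM : StrictMono M) (hb : M b = 0) (hr : 0 < r)
    (hs : 0 < s) (hT : ∀ z, interior (improvementRegion M w r s z) = Set.Iio (T z)) (z₀ : ℝ) :
    Tendsto (fun n => T^[n] z₀) atTop (nhds b) := by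
  have hint := intervalIntegrable_antitone_mul hw hMc
  have below (z : ℝ) (hz : z < b) := improved_boundary_of_lt hMc hM hb hr hz (hT z)
  have above (z : ℝ) (hz : z > b) := improved_boundary_of_gt hw hpos hMc hM hb hr.le hs hz (hT z)
  have drop (z : ℝ) (hz : z < b) : ∫ x in z..T z, w x * M x < 0 :=
    integral_mul_neg_of_mul_add_mul_integral_eq_zero hw (hpos b) hMc hM hb hr hs hz.le
      (below z hz).1 (below z hz).2
  refine tendsto_iterate_of_alternating
    (isClosed_eq (continuous_mul_add_mul_integral hMc r s) continuous_const)
    (isClosed_eq (continuous_integral_endpoints hint) continuous_const)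
    (improved_boundary_self hw hpos hMc hM hb hr.le hs (hT b)) below above ?_ ?_ ?_ z₀
  · intro z hz
    have hzero := (above _ (below z hz).1).2
    refine le_of_not_gt fun hlt => ?_
    have hloss := integral_mul_neg_of_le hw hpos hMc hM hb hz.le hlt
    have hadd := intervalIntegral.integral_add_adjacent_intervals (hint (T (T z)) z) (hint z (T z))
    linarith [drop z hz]
  · intro z hz
    obtain ⟨hTz, hzero⟩ := above z hz
    refine le_of_not_gt fun hlt => ?_
    have hgain := integral_mul_pos_of_ge hw hpos hMc hM hb hz.le hlt
    have hadd := intervalIntegral.integral_add_adjacent_intervals (hint (T z) z) (hint z (T (T z)))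
    linarith [drop _ hTz]
  · intro l hl m hm hfirst hzero
    obtain rfl : b = m := hm.eq_or_lt.resolve_right fun hbm =>
      (integral_mul_neg_of_mul_add_mul_integral_eq_zero
        hw (hpos b) hMc hM hb hr hs hl hbm hfirst).ne hzero
    exact ⟨hl.eq_or_lt.resolve_right fun hlb =>
      (integral_mul_neg_of_le hw hpos hMc hM hb le_rfl hlb).ne hzero, rfl⟩

end PolicyImprovement

section CharacteristicRoot

variable {μ σ a β : ℝ}

/-- The larger root of the characteristic equation `μ * x + σ ^ 2 / 2 * x ^ 2 = β`, the paper's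
`λ₂`. -/
noncomputable def upperRoot (μ σ β : ℝ) : ℝ :=
  (-μ + √(μ ^ 2 + 2 * β * σ ^ 2)) / σ ^ 2

lemma upperRoot_isRoot (hσ : σ ≠ 0) (h : 0 ≤ μ ^ 2 + 2 * β * σ ^ 2) :
    μ * upperRoot μ σ β + (1 / 2) * σ ^ 2 * upperRoot μ σ β ^ 2 = β := by
  have hsq : √(μ ^ 2 + 2 * β * σ ^ 2) ^ 2 = μ ^ 2 + 2 * β * σ ^ 2 := sq_sqrt h
  rw [upperRoot]
  field_simp
  linear_combination hsq

lemma lt_upperRoot (hσ : σ ≠ 0) (h : μ * a + (1 / 2) * σ ^ 2 * a ^ 2 < β) :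
    a < upperRoot μ σ β := by
  have hσ2 : 0 < σ ^ 2 := by positivity
  have hlt : μ + σ ^ 2 * a < √(μ ^ 2 + 2 * β * σ ^ 2) := by
    refine lt_sqrt_of_sq_lt ?_
    calc (μ + σ ^ 2 * a) ^ 2
        = μ ^ 2 + 2 * (μ * a + (1 / 2) * σ ^ 2 * a ^ 2) * σ ^ 2 := by ring
      _ < μ ^ 2 + 2 * β * σ ^ 2 := by gcongr
  rw [upperRoot, lt_div_iff₀ hσ2]
  linarith

end CharacteristicRoot

section ExponentialReward

variable {μ c a β L k s D : ℝ}

/-- The smooth-fit defect `-J_z''(z-)` of the value function at its own boundary `z`, where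
`J_z x = k * exp (a * x) + waitingCoeff c a L k z * exp (L * x)` for `x < z`. -/
noncomputable def fitDefect (c a L k z : ℝ) : ℝ :=
  (L - a) * (k * a * exp (a * z)) - L * c

/-- The coefficient `K₂ z` of the homogeneous solution in the waiting region, chosen so that
`J_z' z = c`. -/
noncomputable def waitingCoeff (c a L k z : ℝ) : ℝ :=
  (c - k * a * exp (a * z)) / (L * exp (L * z))

/-- The zero-order `q`-function of the control law with waiting region `Set.Iio z`. -/
noncomputable def zeroOrderQ (c a L k x z : ℝ) : ℝ :=
  if x < z then c - (k * a * exp (a * x) + waitingCoeff c a L k z * L * exp (L * x)) else 0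

/-- The first-order `q`-function of the control law with waiting region `Set.Iio z`. -/
noncomputable def firstOrderQ (μ c a β L k x z : ℝ) : ℝ :=
  if x < z then 0
  else exp (a * x)
    - β * (c * (x - z) + k * exp (a * z) + waitingCoeff c a L k z * exp (L * z)) + μ * c

lemma continuous_fitDefect : Continuous (fitDefect c a L k) := by
  unfold fitDefect
  fun_prop

lemma strictMono_fitDefect (ha : 0 < a) (hL : a < L) (hk : 0 < k) :
    StrictMono (fitDefect c a L k) := fun x y hxy => by
  have : 0 < L - a := sub_pos.2 hL
  unfold fitDefect
  gcongr

lemma fitDefect_log_eq_zero (ha : 0 < a) (hL : a < L) (hc : 0 < c) (hD : 0 < D) :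
    fitDefect c a L (1 / D) ((1 / a) * log (L * c * D / (L * a - a ^ 2))) = 0 := by
  have hLa : 0 < L - a := sub_pos.2 hL
  have hL₀ : 0 < L := ha.trans hL
  rw [fitDefect, show L * a - a ^ 2 = a * (L - a) by ring, ← mul_assoc a,
    mul_one_div_cancel ha.ne', one_mul, exp_log (by positivity)]
  field_simp
  ring

lemma hasDerivAt_exp_const_mul (a x : ℝ) :
    HasDerivAt (fun x => exp (a * x)) (a * exp (a * x)) x :=
  (hasDerivAt_const_mul a).exp.congr_deriv (mul_comm _ _)

lemma integral_fitDefect (z x : ℝ) :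
    ∫ t in z..x, fitDefect c a L k t =
      (L - a) * k * (exp (a * x) - exp (a * z)) - L * c * (x - z) := by
  have hderiv (t : ℝ) :
      HasDerivAt (fun t => (L - a) * k * exp (a * t) - L * c * t) (fitDefect c a L k t) t :=
    (((hasDerivAt_exp_const_mul a t).const_mul ((L - a) * k)).sub
      ((hasDerivAt_id t).const_mul (L * c))).congr_deriv (by rw [fitDefect]; ring)
  rw [intervalIntegral.integral_eq_sub_of_hasDerivAt (fun t _ => hderiv t)
    (continuous_fitDefect.intervalIntegrable z x)]
  ring

lemma integral_exp_neg_mul_fitDefect (x z : ℝ) :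
    ∫ t in x..z, exp (-L * t) * fitDefect c a L k t =
      (c - k * a * exp (a * z)) * exp (-L * z) - (c - k * a * exp (a * x)) * exp (-L * x) := by
  have hderiv (t : ℝ) : HasDerivAt (fun t => (c - k * a * exp (a * t)) * exp (-L * t))
      (exp (-L * t) * fitDefect c a L k t) t :=
    ((((hasDerivAt_exp_const_mul a t).const_mul (k * a)).const_sub c).mul
      (hasDerivAt_exp_const_mul (-L) t)).congr_deriv (by rw [fitDefect]; ring)
  exact intervalIntegral.integral_eq_sub_of_hasDerivAt (fun t _ => hderiv t)
    (((by fun_prop : Continuous fun t => exp (-L * t)).mul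
      continuous_fitDefect).intervalIntegrable x z)

lemma zeroOrderQ_of_lt (hL : L ≠ 0) {x z : ℝ} (h : x < z) :
    zeroOrderQ c a L k x z =
      -(exp (L * x) * ∫ t in x..z, exp (-L * t) * fitDefect c a L k t) := by
  rw [zeroOrderQ, if_pos h, integral_exp_neg_mul_fitDefect, waitingCoeff]
  simp only [neg_mul, exp_neg]
  field_simp
  ring

lemma firstOrderQ_of_ge (hL : L ≠ 0) (hroot : μ * L + s * L ^ 2 = β)
    (hk : k * (β - μ * a - s * a ^ 2) = 1) {x z : ℝ} (h : z ≤ x) :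
    firstOrderQ μ c a β L k x z =
      s * fitDefect c a L k x + β / L * ∫ t in z..x, fitDefect c a L k t := by
  have hβL : β / L = μ + s * L := by rw [← hroot]; field_simp
  have hcoeff : β * (waitingCoeff c a L k z * exp (L * z)) =
      (μ + s * L) * (c - k * a * exp (a * z)) := by
    rw [← hβL, waitingCoeff]
    field_simp
  rw [firstOrderQ, if_neg h.not_gt, mul_add, hcoeff, integral_fitDefect, hβL, fitDefect, ← hroot]
  rw [← hroot] at hk
  linear_combination -exp (a * x) * hk

lemma setOf_zeroOrderQ_firstOrderQ_eq_improvementRegion (hL : L ≠ 0)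
    (hroot : μ * L + s * L ^ 2 = β) (hk : k * (β - μ * a - s * a ^ 2) = 1) (z : ℝ) :
    {x | zeroOrderQ c a L k x z ≥ 0 ∧ firstOrderQ μ c a β L k x z ≤ 0} =
      improvementRegion (fitDefect c a L k) (fun t => exp (-L * t)) (β / L) s z := by
  ext x
  rcases lt_or_ge x z with hxz | hzx
  · have hfirst : firstOrderQ μ c a β L k x z = 0 := if_pos hxz
    simp only [Set.mem_ofPred_eq, mem_improvementRegion_of_lt hxz, zeroOrderQ_of_lt hL hxz, hfirst,
      le_refl, and_true, ge_iff_le, neg_nonneg]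
    exact ⟨fun h => le_of_mul_le_mul_left (h.trans_eq (mul_zero _).symm) (exp_pos _),
      mul_nonpos_of_nonneg_of_nonpos (exp_pos _).le⟩
  · have hzero : zeroOrderQ c a L k x z = 0 := if_neg hzx.not_gt
    simp only [Set.mem_ofPred_eq, mem_improvementRegion_of_ge hzx, hzero, ge_iff_le, le_refl,
      true_and, firstOrderQ_of_ge hL hroot hk hzx]

end ExponentialReward

theorem stmt_19
    (μ σ c a β : ℝ)
    (hσ : σ > 0) (hc : c > 0) (ha : a > 0) (hβ : β > 0)
    (hβ' : β > μ * a + (1/2) * σ^2 * a^2)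
    (lam₁ lam₂ K₁ xhat C₂ : ℝ)
    (hlam₁ : lam₁ = (-μ - Real.sqrt (μ^2 + 2*β*σ^2)) / σ^2)
    (hlam₂ : lam₂ = (-μ + Real.sqrt (μ^2 + 2*β*σ^2)) / σ^2)
    (hK₁ : K₁ = 1 / (β - μ*a - (1/2)*σ^2*a^2))
    (hxhat : xhat = (1/a) * Real.log (lam₂*c*(β - μ*a - (1/2)*σ^2*a^2) / (lam₂*a - a^2)))
    (hC₂ : C₂ = -(a^2 / (lam₂^2 * (β - μ*a - (1/2)*σ^2*a^2))) * Real.exp ((a - lam₂) * xhat))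
    (K₂ : ℝ → ℝ)
    (hK₂ : ∀ z, K₂ z = (c - K₁*a*Real.exp (a*z)) / (lam₂ * Real.exp (lam₂*z)))
    (q₀ q₁ : ℝ → ℝ → ℝ)
    (hq₀ : ∀ x z, q₀ x z = if x < z then c - (K₁*a*Real.exp (a*x) + K₂ z * lam₂ * Real.exp (lam₂*x)) else 0)
    (hq₁ : ∀ x z, q₁ x z = if x < z then 0
      else Real.exp (a*x) - β * (c*(x - z) + K₁*Real.exp (a*z) + K₂ z * Real.exp (lam₂*z)) + μ*c)
    (T : ℝ → ℝ)
    (hT : ∀ z : ℝ, interior {x : ℝ | q₀ x z ≥ 0 ∧ q₁ x z ≤ 0} = Set.Iio (T z)) :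
    ∀ z₀ : ℝ, Tendsto (fun n => T^[n] z₀) atTop (nhds xhat) := by
  have hroot : μ * lam₂ + (1 / 2) * σ ^ 2 * lam₂ ^ 2 = β :=
    hlam₂ ▸ upperRoot_isRoot hσ.ne' (by positivity)
  have haL : a < lam₂ := hlam₂ ▸ lt_upperRoot hσ.ne' hβ'
  have hL : 0 < lam₂ := ha.trans haL
  have hD : 0 < β - μ * a - (1 / 2) * σ ^ 2 * a ^ 2 := by linarith
  have hK₁pos : 0 < K₁ := hK₁ ▸ one_div_pos.2 hD
  have hK₁D : K₁ * (β - μ * a - (1 / 2) * σ ^ 2 * a ^ 2) = 1 := hK₁ ▸ one_div_mul_cancel hD.ne'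
  have hfit : fitDefect c a lam₂ K₁ xhat = 0 :=
    hK₁ ▸ hxhat ▸ fitDefect_log_eq_zero ha haL hc hD
  obtain rfl : K₂ = waitingCoeff c a lam₂ K₁ := funext hK₂
  obtain rfl : q₀ = zeroOrderQ c a lam₂ K₁ := funext₂ hq₀
  obtain rfl : q₁ = firstOrderQ μ c a β lam₂ K₁ := funext₂ hq₁
  have hweight : Antitone fun t => exp (-lam₂ * t) := fun x y hxy =>
    exp_le_exp.2 (mul_le_mul_of_nonpos_left hxy (neg_nonpos.2 hL.le))
  refine tendsto_iterate_of_interior_improvementRegion hweight (fun t => exp_pos _)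
    continuous_fitDefect (strictMono_fitDefect ha haL hK₁pos) hfit (div_pos hβ hL)
    (by positivity : 0 < (1 / 2) * σ ^ 2) fun z => ?_
  rw [← setOf_zeroOrderQ_firstOrderQ_eq_improvementRegion hL.ne' hroot hK₁D z]
  exact hT z
end
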